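/- arXiv:0801.2549 — 3 statements merged into one kernel-verified Lean document; each statement's English description precedes it below -/
import Mathlib

section
/- Let δ > 0 and let f : B_δ → ℂ be a holomorphic 1-periodic function whose derivative ∂_θ f is bounded on B_δ. Then sup_{θ∈B_δ} |f(θ)| ≤ |∫₀¹ f(x) dx| + sup_{θ∈B_δ} |∂_θ f(θ)|. -/
noncomputable def distNearestInt (x : ℝ) : ℝ := |x - round x|

noncomputable def GammaA (α : ℝ) (N : ℕ) : ℝ :=
  sSup ((fun n : ℤ => (distNearestInt ((n : ℝ) * α))⁻¹) '' {n : ℤ | n ≠ 0 ∧ |n| ≤ (N : ℤ)})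

noncomputable def GammaAB (α β : ℝ) (N : ℕ) : ℝ :=
  sSup ((fun n : ℤ => (distNearestInt ((n : ℝ) * α - β))⁻¹) '' {n : ℤ | |n| ≤ (N : ℤ)})

def IsNonRationalPair (α β : ℝ) : Prop := ∀ k m : ℤ, (k : ℝ) * α - β ≠ (m : ℝ)

def BrjunoCond (α : ℝ) : Prop :=
  Summable (fun N : ℕ => Real.log (GammaA α (N + 1)) / ((N : ℝ) + 1) ^ 2)

def Strip (δ : ℝ) : Set ℂ := {θ : ℂ | |θ.im| < δ}

theorem mk_mem_strip_iff {δ x y : ℝ} : (x + y * Complex.I : ℂ) ∈ Strip δ ↔ |y| < δ := by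
  simp [Strip]

theorem isOpen_strip (δ : ℝ) : IsOpen (Strip δ) :=
  isOpen_lt (by fun_prop) continuous_const

theorem convex_strip (δ : ℝ) : Convex ℝ (Strip δ) := by
  have h : Strip δ = Complex.imLm ⁻¹' Set.Ioo (-δ) δ := by
    ext θ
    simp [Strip, abs_lt]
  exact h ▸ (convex_Ioo (-δ) δ).linear_preimage Complex.imLm

/-- The mean over a period of a holomorphic 1-periodic function on a strip is the same on every
horizontal line. -/
theorem integral_horizontal_eq {δ : ℝ} {f : ℂ → ℂ}
    (hf : DifferentiableOn ℂ f (Strip δ)) (hper : ∀ θ ∈ Strip δ, f (θ + 1) = f θ)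
    (a : ℝ) {b : ℝ} (hb : |b| < δ) :
    ∫ x in a..a + 1, f (x + b * Complex.I) = ∫ x in (0 : ℝ)..1, f x := by
  have hsmall : ∀ y ∈ Set.uIcc 0 b, |y| < δ := fun y hy => by
    simpa using (Set.abs_sub_left_of_mem_uIcc hy).trans_lt (by simpa using hb)
  have hrect := Complex.integral_boundary_rect_eq_zero_of_differentiableOn f 0 (1 + b * Complex.I)
    (hf.mono fun θ hθ => hsmall θ.im (by simpa using hθ.2))
  have hvert : ∫ y in (0 : ℝ)..b, f (1 + y * Complex.I) = ∫ y in (0 : ℝ)..b, f (y * Complex.I) :=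
    intervalIntegral.integral_congr fun y hy => by
      simpa [add_comm] using hper (y * Complex.I)
        (by simpa using (mk_mem_strip_iff (x := 0)).2 (hsmall y hy))
  have hperiodic : Function.Periodic (fun x : ℝ => f (x + b * Complex.I)) 1 := fun x => by
    simpa [add_right_comm] using hper _ (mk_mem_strip_iff (x := x) |>.2 hb)
  rw [hperiodic.intervalIntegral_add_eq a 0, zero_add]
  simp [hvert] at hrect
  exact (sub_eq_zero.1 hrect).symm

/-- sup of a periodic holomorphic function on the strip is bounded by
the modulus of its mean plus the sup of its derivative. -/
theorem stmt_4 (δ : ℝ) (hδ : 0 < δ) (f : ℂ → ℂ)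
    (hf : DifferentiableOn ℂ f (Strip δ))
    (hper : ∀ θ ∈ Strip δ, f (θ + 1) = f θ)
    (C : ℝ) (hC : ∀ θ ∈ Strip δ, ‖deriv f θ‖ ≤ C) :
    ∀ θ ∈ Strip δ, ‖f θ‖ ≤ ‖∫ x in (0:ℝ)..1, f x‖ + C := by
  intro θ hθ
  set g : ℝ → ℂ := fun x => f (x + θ.im * Complex.I)
  have hmem (x : ℝ) : (x + θ.im * Complex.I : ℂ) ∈ Strip δ := mk_mem_strip_iff.2 hθ
  have hgc : Continuous g := hf.continuousOn.comp_continuous (by fun_prop) hmem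
  have hC0 : 0 ≤ C := (norm_nonneg _).trans (hC θ hθ)
  have hbound : ‖∫ x in θ.re..θ.re + 1, (f θ - g x)‖ ≤ C * |θ.re + 1 - θ.re| := by
    refine intervalIntegral.norm_integral_le_of_norm_le_const fun x hx => ?_
    rw [Set.uIoc_of_le (by linarith)] at hx
    have hdist : ‖θ - (x + θ.im * Complex.I)‖ ≤ 1 := by
      have h : θ - (x + θ.im * Complex.I) = ((θ.re - x : ℝ) : ℂ) := by
        apply Complex.ext <;> simp
      rw [h, Complex.norm_real, Real.norm_eq_abs, abs_le]
      constructor <;> linarith [hx.1, hx.2]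
    calc ‖f θ - g x‖ ≤ C * ‖θ - (x + θ.im * Complex.I)‖ :=
          (convex_strip δ).norm_image_sub_le_of_norm_deriv_le
            (fun z hz => hf.differentiableAt ((isOpen_strip δ).mem_nhds hz)) hC (hmem x) hθ
      _ ≤ C := mul_le_of_le_one_right hC0 hdist
  rw [intervalIntegral.integral_sub (by simp) (hgc.intervalIntegrable _ _),
    integral_horizontal_eq hf hper _ hθ] at hbound
  simp only [intervalIntegral.integral_const, add_sub_cancel_left, one_smul, abs_one,
    mul_one] at hbound
  linarith [norm_sub_norm_le (f θ) (∫ x in (0 : ℝ)..1, f x)]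
end

section
/- There exists a universal constant C₂ > 0 with the following property. Let α be an irrational real number, δ > 0, N ≥ 1 an integer, and let f : B_δ → ℂ be a bounded holomorphic 1-periodic function with ∫₀¹ f(x) dx = 0. Then the trigonometric polynomial g(θ) = ∑_{0<|n|≤N} f̂(n) e^{2πinθ}/(1 − e^{2πinα}) satisfies g(θ) − g(θ+α) = f|_N(θ) for all θ, and one has the bounds ‖g‖_{B_δ} ≤ C₂ N Γ_α(N) ‖f‖_{B_δ} and ‖∂_θ g‖_{B_δ} ≤ C₂ N² Γ_α(N) ‖f‖_{B_δ}. -/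
noncomputable def supNorm (f : ℂ → ℂ) (s : Set ℂ) : ℝ := sSup ((fun z => ‖f z‖) '' s)

noncomputable def fCoeff (f : ℂ → ℂ) (n : ℤ) : ℂ :=
  ∫ x in (0:ℝ)..1, f x * Complex.exp (-(2 * Real.pi * Complex.I * n * x))

/-- The truncation of f up to order N. -/
noncomputable def truncN (f : ℂ → ℂ) (N : ℕ) (θ : ℂ) : ℂ :=
  ∑ n ∈ Finset.Icc (-(N : ℤ)) (N : ℤ), fCoeff f n * Complex.exp (2 * Real.pi * Complex.I * n * θ)

open Complex in
/-- Shifting the contour of the Fourier integral of a periodic holomorphic function vertically. -/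
theorem fCoeff_eq_integral_shift {δ : ℝ} {f : ℂ → ℂ} (hf : DifferentiableOn ℂ f (Strip δ))
    (hper : ∀ θ ∈ Strip δ, f (θ + 1) = f θ) (n : ℤ) {t : ℝ} (ht : |t| < δ) :
    fCoeff f n = ∫ x in (0:ℝ)..1,
      f (x + t * I) * exp (-(2 * Real.pi * I * n * (x + t * I))) := by
  set F : ℂ → ℂ := fun z => f z * exp (-(2 * Real.pi * I * n * z)) with hF
  have hFd : DifferentiableOn ℂ F (Strip δ) :=
    hf.mul (by fun_prop : Differentiable ℂ fun z : ℂ =>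
      exp (-(2 * Real.pi * I * n * z))).differentiableOn
  have hFper : ∀ θ ∈ Strip δ, F (θ + 1) = F θ := by
    intro θ hθ
    simp only [hF, hper θ hθ]
    congr 1
    rw [exp_eq_exp_iff_exists_int]
    exact ⟨-n, by push_cast; ring⟩
  have hbetween : ∀ y ∈ Set.uIcc 0 t, |y| < δ := by
    intro y hy
    have h := Set.abs_sub_left_of_mem_uIcc hy
    simp only [sub_zero] at h
    exact h.trans_lt ht
  have hrect := integral_boundary_rect_eq_zero_of_differentiableOn F 0 (1 + t * I)
    (hFd.mono (by
      intro z hz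
      have := (mem_reProdIm.1 hz).2
      exact hbetween _ (by simpa using this)))
  have hvert : (∫ y in (0:ℝ)..t, F (1 + y * I)) = ∫ y in (0:ℝ)..t, F (y * I) := by
    refine intervalIntegral.integral_congr fun y hy => ?_
    have := hFper (y * I) (by simpa [Strip] using hbetween y hy)
    simpa [add_comm] using this
  simp only [zero_re, zero_im, add_re, one_re, mul_re, ofReal_re, I_re, mul_zero, ofReal_im, I_im,
    mul_one, sub_self, add_zero, add_im, one_im, mul_im, zero_add, ofReal_zero, zero_mul,
    ofReal_one, hvert, add_sub_cancel_right, sub_eq_zero] at hrect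
  exact hrect

open Complex in
theorem norm_fCoeff_mul_exp_le {δ : ℝ} {f : ℂ → ℂ} (hf : DifferentiableOn ℂ f (Strip δ))
    (hper : ∀ θ ∈ Strip δ, f (θ + 1) = f θ)
    (hbdd : BddAbove ((fun z => ‖f z‖) '' Strip δ)) (n : ℤ) {θ : ℂ} (hθ : θ ∈ Strip δ) :
    ‖fCoeff f n * exp (2 * Real.pi * I * n * θ)‖ ≤ supNorm f (Strip δ) := by
  rw [fCoeff_eq_integral_shift hf hper n (t := θ.im) hθ, ← intervalIntegral.integral_mul_const]
  refine (intervalIntegral.norm_integral_le_of_norm_le_const (C := supNorm f (Strip δ))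
    fun x _ => ?_).trans (by simp)
  have hmem : (x + θ.im * I : ℂ) ∈ Strip δ := by simpa [Strip] using hθ
  have hexp : ‖exp (-(2 * Real.pi * I * n * (x + θ.im * I))) * exp (2 * Real.pi * I * n * θ)‖
      = 1 := by
    rw [← exp_add, norm_exp, Real.exp_eq_one_iff]
    simp
  rw [mul_assoc, norm_mul, hexp, mul_one]
  exact le_csSup hbdd ⟨_, hmem, rfl⟩

open Complex in
theorem distNearestInt_le_norm_one_sub_exp (x : ℝ) :
    distNearestInt x ≤ ‖1 - exp (2 * Real.pi * I * x)‖ := by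
  have hexp : exp (2 * Real.pi * I * x) = exp (I * (2 * Real.pi * (x - round x) : ℝ)) := by
    rw [exp_eq_exp_iff_exists_int]
    exact ⟨round x, by push_cast; ring⟩
  have hsin := Real.mul_abs_le_abs_sin (x := Real.pi * (x - round x)) (by
    rw [abs_mul, abs_of_pos Real.pi_pos]
    nlinarith [abs_sub_round x, Real.pi_pos])
  rw [abs_mul, abs_of_pos Real.pi_pos, ← mul_assoc, div_mul_cancel₀ _ Real.pi_ne_zero] at hsin
  rw [hexp, norm_sub_rev, norm_exp_I_mul_ofReal_sub_one, norm_mul, Real.norm_eq_abs,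
    Real.norm_eq_abs, show 2 * Real.pi * (x - round x) / 2 = Real.pi * (x - round x) by ring,
    abs_two]
  unfold distNearestInt
  linarith [abs_nonneg (x - round x)]

theorem distNearestInt_pos {x : ℝ} (hx : Irrational x) : 0 < distNearestInt x :=
  abs_pos.2 (sub_ne_zero.2 (hx.ne_int _))

theorem inv_distNearestInt_le_GammaA (α : ℝ) {N : ℕ} {n : ℤ} (hn : n ≠ 0) (hnN : |n| ≤ (N : ℤ)) :
    (distNearestInt (n * α))⁻¹ ≤ GammaA α N := by
  refine le_csSup (Set.Finite.bddAbove (Set.Finite.image _ ?_)) ⟨n, ⟨hn, hnN⟩, rfl⟩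
  exact (Set.finite_Icc (-(N : ℤ)) N).subset fun m hm => abs_le.1 hm.2

theorem supNorm_le {f : ℂ → ℂ} {δ M : ℝ} (hδ : 0 < δ) (h : ∀ z ∈ Strip δ, ‖f z‖ ≤ M) :
    supNorm f (Strip δ) ≤ M :=
  csSup_le (Set.Nonempty.image _ ⟨0, by simpa [Strip] using hδ⟩)
    (by rintro _ ⟨z, hz, rfl⟩; exact h z hz)

theorem norm_sum_erase_zero_le {N : ℕ} {a : ℤ → ℂ} {K : ℝ}
    (h : ∀ n ∈ (Finset.Icc (-(N : ℤ)) (N : ℤ)).erase 0, ‖a n‖ ≤ K) :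
    ‖∑ n ∈ (Finset.Icc (-(N : ℤ)) (N : ℤ)).erase 0, a n‖ ≤ 2 * N * K := by
  have hcard : ((Finset.Icc (-(N : ℤ)) (N : ℤ)).erase 0).card = 2 * N := by
    rw [Finset.card_erase_of_mem (by simp), Int.card_Icc]
    omega
  refine (norm_sum_le_of_le _ h).trans_eq ?_
  rw [Finset.sum_const, hcard, nsmul_eq_mul]
  push_cast
  ring

/-- solution and estimates for the truncated cohomological equation
g(θ) − g(θ+α) = f|_N(θ), for zero-mean f. -/
theorem stmt_7 :
    ∃ C₂ : ℝ, 0 < C₂ ∧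
      ∀ (α : ℝ), Irrational α →
        ∀ (δ : ℝ), 0 < δ →
          ∀ (N : ℕ), 1 ≤ N →
            ∀ f : ℂ → ℂ,
              DifferentiableOn ℂ f (Strip δ) →
              (∀ θ ∈ Strip δ, f (θ + 1) = f θ) →
              BddAbove ((fun z => ‖f z‖) '' Strip δ) →
              (∫ x in (0:ℝ)..1, f x) = 0 →
              ∀ g : ℂ → ℂ,
                (g = fun θ => ∑ n ∈ (Finset.Icc (-(N : ℤ)) (N : ℤ)).erase 0,
                    fCoeff f n * Complex.exp (2 * Real.pi * Complex.I * n * θ) /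
                      (1 - Complex.exp (2 * Real.pi * Complex.I * n * α))) →
                (∀ θ : ℂ, g θ - g (θ + α) = truncN f N θ) ∧
                  supNorm g (Strip δ) ≤ C₂ * N * GammaA α N * supNorm f (Strip δ) ∧
                  supNorm (deriv g) (Strip δ) ≤ C₂ * N ^ 2 * GammaA α N * supNorm f (Strip δ) := by
  refine ⟨16, by norm_num, ?_⟩
  intro α hα δ hδ N hN f hf hper hbdd hmean g hg
  set S := (Finset.Icc (-(N : ℤ)) (N : ℤ)).erase 0 with hS
  have hirr : ∀ n ∈ S, Irrational ((n : ℝ) * α) := fun n hn =>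
    hα.intCast_mul (Finset.ne_of_mem_erase hn)
  have hden : ∀ n : ℤ, distNearestInt (n * α) ≤
      ‖1 - Complex.exp (2 * Real.pi * Complex.I * n * α)‖ := by
    intro n
    have := distNearestInt_le_norm_one_sub_exp (n * α)
    push_cast at this
    rwa [← mul_assoc] at this
  have habs : ∀ n ∈ S, |n| ≤ (N : ℤ) := fun n hn =>
    abs_le.2 (Finset.mem_Icc.1 (Finset.mem_of_mem_erase hn))
  have hM : 0 ≤ supNorm f (Strip δ) :=
    Real.sSup_nonneg (by rintro _ ⟨z, -, rfl⟩; exact norm_nonneg _)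
  have hΓ : 0 ≤ GammaA α N :=
    Real.sSup_nonneg (by rintro _ ⟨z, -, rfl⟩; exact inv_nonneg.2 (abs_nonneg _))
  have hMΓ := mul_nonneg hΓ hM
  have hN0 : (0 : ℝ) ≤ N := N.cast_nonneg
  have hterm : ∀ θ ∈ Strip δ, ∀ n ∈ S,
      ‖fCoeff f n * Complex.exp (2 * Real.pi * Complex.I * n * θ) /
        (1 - Complex.exp (2 * Real.pi * Complex.I * n * α))‖ ≤
        GammaA α N * supNorm f (Strip δ) := by
    intro θ hθ n hn
    rw [norm_div, div_eq_inv_mul]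
    refine mul_le_mul ?_ (norm_fCoeff_mul_exp_le hf hper hbdd n hθ) (norm_nonneg _) hΓ
    exact (inv_anti₀ (distNearestInt_pos (hirr n hn)) (hden n)).trans
      (inv_distNearestInt_le_GammaA α (Finset.ne_of_mem_erase hn) (habs n hn))
  refine ⟨fun θ => ?_, supNorm_le hδ fun θ hθ => ?_, supNorm_le hδ fun θ hθ => ?_⟩
  · have hzero : fCoeff f 0 = 0 := by simpa [fCoeff] using hmean
    rw [hg, truncN, ← Finset.add_sum_erase _ _ (show (0 : ℤ) ∈ Finset.Icc (-(N : ℤ)) N by simp),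
      hzero, zero_mul, zero_add, ← Finset.sum_sub_distrib]
    refine Finset.sum_congr rfl fun n hn => ?_
    have hne : 1 - Complex.exp (2 * Real.pi * Complex.I * n * α) ≠ 0 :=
      norm_pos_iff.1 ((distNearestInt_pos (hirr n hn)).trans_le (hden n))
    rw [mul_add (2 * Real.pi * Complex.I * n : ℂ) θ α, Complex.exp_add, ← sub_div, div_eq_iff hne]
    ring
  · rw [hg]
    refine (norm_sum_erase_zero_le (hterm θ hθ)).trans ?_
    nlinarith [mul_nonneg hN0 hMΓ]
  · have hderiv : HasDerivAt g (∑ n ∈ S, (2 * Real.pi * Complex.I * n) *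
        (fCoeff f n * Complex.exp (2 * Real.pi * Complex.I * n * θ) /
          (1 - Complex.exp (2 * Real.pi * Complex.I * n * α)))) θ := by
      rw [hg]
      refine HasDerivAt.fun_sum fun n _ => ?_
      refine HasDerivAt.congr_deriv (((((hasDerivAt_id' θ).const_mul
        (2 * Real.pi * Complex.I * n : ℂ)).cexp).const_mul
        (fCoeff f n)).div_const (1 - Complex.exp (2 * Real.pi * Complex.I * n * α))) ?_
      ring
    have hbound : ∀ n ∈ S, ‖(2 * Real.pi * Complex.I * n) *
        (fCoeff f n * Complex.exp (2 * Real.pi * Complex.I * n * θ) /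
          (1 - Complex.exp (2 * Real.pi * Complex.I * n * α)))‖ ≤
        8 * N * (GammaA α N * supNorm f (Strip δ)) := by
      intro n hn
      rw [norm_mul]
      refine mul_le_mul ?_ (hterm θ hθ n hn) (norm_nonneg _) (by positivity)
      have hnN : |(n : ℝ)| ≤ N := by exact_mod_cast habs n hn
      simp only [norm_mul, Complex.norm_ofNat, Complex.norm_real, Complex.norm_I,
        Complex.norm_intCast, mul_one, Real.norm_eq_abs, abs_of_pos Real.pi_pos]
      exact mul_le_mul (by linarith [Real.pi_le_four]) hnN (abs_nonneg _) (by norm_num)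
    rw [hderiv.deriv]
    exact (norm_sum_erase_zero_le hbound).trans_eq (by ring)
end

section
/- Let (α,β) be a pair of real numbers satisfying condition B₁. Then there exists a constant K₁ > 0, depending only on (α,β), such that for every ℵ > 2 the following holds. Set A_n = Γ_{α,β}(2^n), B_n = Γ_α(2^n) and l_n = e^{−n²}/(16 ℵ A_n B_n 2^n). Then there exists a sequence of real positive numbers d_n¹ > 0 (n ≥ 0) such that l_{n+1} = ℵ l_n e^{−2π 2^n d_n¹}/d_n¹ for every n ≥ 0, and ∑_{n≥0} d_n¹ < K₁ (1 + log ℵ). -/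
/-- Condition B₁ for a pair (α,β). -/
def BrjunoPairCond (α β : ℝ) : Prop :=
  Irrational α ∧ IsNonRationalPair α β ∧ BrjunoCond α ∧
    Summable (fun n : ℕ => Real.log (GammaAB α β (n + 1)) / ((n : ℝ) + 1) ^ 2)

/-- If `g` is nonnegative and monotone on positive integers and `∑ g N / N ^ 2` converges, then so
does `∑ g (2 ^ n) / 2 ^ n`. -/
lemma summable_two_pow_of_summable_div_sq {g : ℕ → ℝ} (hg0 : ∀ N, 1 ≤ N → 0 ≤ g N)
    (hmono : ∀ M N, 1 ≤ M → M ≤ N → g M ≤ g N)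
    (hsum : Summable fun N : ℕ => g (N + 1) / ((N : ℝ) + 1) ^ 2) :
    Summable fun n : ℕ => g (2 ^ n) / 2 ^ n := by
  have hone : ∀ n : ℕ, 1 ≤ 2 ^ n := fun n => Nat.one_le_two_pow
  have hnonneg : ∀ N : ℕ, 0 ≤ g (N + 1) / ((N : ℝ) + 1) ^ 2 := fun N =>
    div_nonneg (hg0 _ (by omega)) (by positivity)
  have hblock : ∀ n : ℕ, g (2 ^ n) / 2 ^ n ≤
      4 * ∑ N ∈ Finset.Ico (2 ^ n) (2 ^ (n + 1)), g N / (N : ℝ) ^ 2 := by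
    intro n
    have hle : ∀ N ∈ Finset.Ico (2 ^ n) (2 ^ (n + 1)),
        g (2 ^ n) / ((2 : ℝ) ^ (n + 1)) ^ 2 ≤ g N / (N : ℝ) ^ 2 := by
      intro N hN
      rw [Finset.mem_Ico] at hN
      have hN0 : (0 : ℝ) < N := by exact_mod_cast (hone n).trans hN.1
      have hN1 : (N : ℝ) ≤ 2 ^ (n + 1) := by exact_mod_cast hN.2.le
      exact div_le_div₀ (hg0 _ ((hone n).trans hN.1)) (hmono _ _ (hone n) hN.1)
        (by positivity) (pow_le_pow_left₀ hN0.le hN1 2)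
    have hcard := Finset.card_nsmul_le_sum _ _ _ hle
    have hsize : (Finset.Ico (2 ^ n) (2 ^ (n + 1))).card = 2 ^ n := by
      rw [Nat.card_Ico, pow_succ]; omega
    rw [hsize, nsmul_eq_mul] at hcard
    calc g (2 ^ n) / 2 ^ n
        = 4 * (((2 ^ n : ℕ) : ℝ) * (g (2 ^ n) / ((2 : ℝ) ^ (n + 1)) ^ 2)) := by
          push_cast; field_simp; ring
      _ ≤ _ := by linarith
  have hpartial : ∀ M : ℕ, ∑ n ∈ Finset.range M, g (2 ^ n) / 2 ^ n ≤
      4 * ∑ N ∈ Finset.Ico 1 (2 ^ M), g N / (N : ℝ) ^ 2 := by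
    intro M
    induction M with
    | zero => simp
    | succ M ih =>
      rw [Finset.sum_range_succ, ← Finset.sum_Ico_consecutive _ (hone M)
        (Nat.pow_le_pow_right two_pos M.le_succ)]
      linarith [hblock M]
  refine summable_of_sum_range_le (c := 4 * ∑' N : ℕ, g (N + 1) / ((N : ℝ) + 1) ^ 2)
    (fun n => div_nonneg (hg0 _ (hone n)) (by positivity)) fun M => (hpartial M).trans ?_
  rw [Finset.sum_Ico_eq_sum_range]
  refine mul_le_mul_of_nonneg_left ?_ (by norm_num)
  refine le_trans (le_of_eq ?_) (hsum.sum_le_tsum (Finset.range (2 ^ M - 1)) fun N _ => hnonneg N)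
  refine Finset.sum_congr rfl fun N _ => ?_
  rw [add_comm 1 N]; push_cast; rfl

lemma one_le_inv_distNearestInt {x : ℝ} (hx : ∀ m : ℤ, x ≠ m) : 1 ≤ (distNearestInt x)⁻¹ := by
  have hpos : 0 < distNearestInt x := abs_pos.mpr (sub_ne_zero.mpr (hx _))
  have hle : distNearestInt x ≤ 1 / 2 := abs_sub_round x
  exact (one_le_inv₀ hpos).mpr (by linarith)

lemma finite_setOf_abs_le (N : ℕ) : {n : ℤ | |n| ≤ (N : ℤ)}.Finite :=
  (Set.finite_Icc (-(N : ℤ)) N).subset fun _ hn => abs_le.mp hn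

lemma bddAbove_GammaA (α : ℝ) (N : ℕ) :
    BddAbove ((fun n : ℤ => (distNearestInt ((n : ℝ) * α))⁻¹) ''
      {n : ℤ | n ≠ 0 ∧ |n| ≤ (N : ℤ)}) :=
  (((finite_setOf_abs_le N).subset fun _ hn => hn.2).image _).bddAbove

lemma bddAbove_GammaAB (α β : ℝ) (N : ℕ) :
    BddAbove ((fun n : ℤ => (distNearestInt ((n : ℝ) * α - β))⁻¹) ''
      {n : ℤ | |n| ≤ (N : ℤ)}) :=
  ((finite_setOf_abs_le N).image _).bddAbove

lemma GammaA_mono (α : ℝ) {M N : ℕ} (hM : 1 ≤ M) (hMN : M ≤ N) : GammaA α M ≤ GammaA α N :=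
  csSup_le_csSup (bddAbove_GammaA α N)
    (Set.Nonempty.image _ ⟨1, one_ne_zero, by simpa using hM⟩)
    (Set.image_mono fun _ hn => ⟨hn.1, hn.2.trans (by exact_mod_cast hMN)⟩)

lemma GammaAB_mono (α β : ℝ) {M N : ℕ} (hMN : M ≤ N) : GammaAB α β M ≤ GammaAB α β N :=
  csSup_le_csSup (bddAbove_GammaAB α β N) (Set.Nonempty.image _ ⟨0, by simp⟩)
    (Set.image_mono fun n (hn : |n| ≤ (M : ℤ)) =>
      show |n| ≤ (N : ℤ) from hn.trans (by exact_mod_cast hMN))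

lemma one_le_GammaA {α : ℝ} (hα : Irrational α) {N : ℕ} (hN : 1 ≤ N) : 1 ≤ GammaA α N := by
  refine (one_le_inv_distNearestInt (x := ((1 : ℤ) : ℝ) * α) fun m => ?_).trans
    (le_csSup (bddAbove_GammaA α N) ⟨1, ⟨one_ne_zero, by simpa using hN⟩, rfl⟩)
  simpa using hα.ne_int m

lemma one_le_GammaAB {α β : ℝ} (h : IsNonRationalPair α β) (N : ℕ) : 1 ≤ GammaAB α β N :=
  (one_le_inv_distNearestInt (h 0)).trans
    (le_csSup (bddAbove_GammaAB α β N) ⟨0, by simp, rfl⟩)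

/-- The solution of `d * exp (2π 2ⁿ d) = R` is at most `(log R + n + 1) / 2ⁿ`. -/
lemma exists_mul_exp_eq (n : ℕ) {R : ℝ} (hR : 1 ≤ R) :
    ∃ d : ℝ, 0 < d ∧ d ≤ (Real.log R + n + 1) / 2 ^ n ∧
      d * Real.exp (2 * Real.pi * 2 ^ n * d) = R := by
  set u : ℝ := (Real.log R + n + 1) / 2 ^ n with hu
  have hlog : 0 ≤ Real.log R := Real.log_nonneg hR
  have hn : (0 : ℝ) ≤ n := n.cast_nonneg
  have hpow : (0 : ℝ) < 2 ^ n := by positivity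
  have hu_lower : 1 / 2 ^ n ≤ u := by rw [hu]; gcongr; linarith
  have hu0 : 0 ≤ u := le_trans (by positivity) hu_lower
  have hexponent : Real.log R + n ≤ 2 * Real.pi * 2 ^ n * u := by
    have : 2 * Real.pi * 2 ^ n * u = 2 * Real.pi * (Real.log R + n + 1) := by
      rw [hu]; field_simp
    rw [this]
    nlinarith [Real.pi_gt_three]
  have hexp : R * 2 ^ n ≤ Real.exp (2 * Real.pi * 2 ^ n * u) := by
    refine le_trans ?_ (Real.exp_le_exp.mpr hexponent)
    rw [Real.exp_add, Real.exp_log (by linarith)]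
    refine mul_le_mul_of_nonneg_left ?_ (by linarith)
    rw [← mul_one (n : ℝ), Real.exp_nat_mul]
    exact pow_le_pow_left₀ zero_le_two (by linarith [Real.add_one_le_exp (1 : ℝ)]) n
  have hlarge : R ≤ u * Real.exp (2 * Real.pi * 2 ^ n * u) := by
    calc R = 1 / 2 ^ n * (R * 2 ^ n) := by field_simp
      _ ≤ _ := mul_le_mul hu_lower hexp (by positivity) hu0
  have hcont : ContinuousOn (fun d : ℝ => d * Real.exp (2 * Real.pi * 2 ^ n * d))
      (Set.Icc 0 u) := by fun_prop
  obtain ⟨d, hd, hdR⟩ := intermediate_value_Icc hu0 hcont (show R ∈ Set.Icc _ _ from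
    ⟨by simp only [zero_mul]; linarith, hlarge⟩)
  refine ⟨d, lt_of_le_of_ne hd.1 ?_, hd.2, hdR⟩
  rintro rfl
  simp only [zero_mul] at hdR
  linarith

/-- existence of the sequence of strip-width losses d_n¹ with summable
total loss, controlled by K₁(1 + log ℵ). -/
theorem stmt_10 (α β : ℝ) (hB1 : BrjunoPairCond α β) :
    ∃ K₁ : ℝ, 0 < K₁ ∧
      ∀ aleph : ℝ, 2 < aleph →
        ∀ l : ℕ → ℝ,
          (∀ n : ℕ, l n = Real.exp (-(n : ℝ) ^ 2) /
              (16 * aleph * GammaAB α β (2 ^ n) * GammaA α (2 ^ n) * 2 ^ n)) →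
          ∃ d : ℕ → ℝ, (∀ n : ℕ, 0 < d n) ∧
            (∀ n : ℕ, l (n + 1) = aleph * l n * Real.exp (-(2 * Real.pi * 2 ^ n * d n)) / d n) ∧
            Summable d ∧ (∑' n : ℕ, d n) < K₁ * (1 + Real.log aleph) := by
  obtain ⟨hα, hαβ, hA, hAB⟩ := hB1
  have hA1 : ∀ n : ℕ, 1 ≤ GammaA α (2 ^ n) := fun n => one_le_GammaA hα Nat.one_le_two_pow
  have hAB1 : ∀ n : ℕ, 1 ≤ GammaAB α β (2 ^ n) := fun n => one_le_GammaAB hαβ _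
  have hsumA : Summable fun n : ℕ => Real.log (GammaA α (2 ^ n)) / 2 ^ n :=
    summable_two_pow_of_summable_div_sq (g := fun N => Real.log (GammaA α N))
      (fun N hN => Real.log_nonneg (one_le_GammaA hα hN))
      (fun M N hM hMN => Real.log_le_log (by linarith [one_le_GammaA hα hM])
        (GammaA_mono α hM hMN)) hA
  have hsumAB : Summable fun n : ℕ => Real.log (GammaAB α β (2 ^ n)) / 2 ^ n :=
    summable_two_pow_of_summable_div_sq (g := fun N => Real.log (GammaAB α β N))
      (fun N _ => Real.log_nonneg (one_le_GammaAB hαβ N))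
      (fun M N _ hMN => Real.log_le_log (by linarith [one_le_GammaAB hαβ M])
        (GammaAB_mono α β hMN)) hAB
  set s : ℕ → ℝ := fun n => (3 * n + 3 + Real.log (GammaAB α β (2 ^ (n + 1))) +
    Real.log (GammaA α (2 ^ (n + 1)))) / 2 ^ n with hs
  have hgeom : Summable fun n : ℕ => (1 / 2 : ℝ) ^ n := summable_geometric_two
  have hlin : Summable fun n : ℕ => (n : ℝ) * (1 / 2 : ℝ) ^ n := by
    simpa using summable_pow_mul_geometric_of_norm_lt_one 1
      (show ‖(1 / 2 : ℝ)‖ < 1 by norm_num)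
  have hs_sum : Summable s := by
    have hA' := (summable_nat_add_iff 1).mpr hsumA
    have hAB' := (summable_nat_add_iff 1).mpr hsumAB
    refine ((((hlin.mul_left 3).add (hgeom.mul_left 3)).add (hAB'.mul_left 2)).add
      (hA'.mul_left 2)).congr fun n => ?_
    simp only [hs, div_pow, one_pow]
    field_simp
    ring
  have hs_nonneg : ∀ n, 0 ≤ s n := fun n => by
    have h1 := Real.log_nonneg (hA1 (n + 1))
    have h2 := Real.log_nonneg (hAB1 (n + 1))
    positivity
  have hS : 0 ≤ ∑' n, s n := tsum_nonneg hs_nonneg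
  refine ⟨∑' n, s n + 3, by linarith, fun aleph haleph l hl => ?_⟩
  have haleph0 : 0 < aleph := by linarith
  have hlogaleph : 0 < Real.log aleph := Real.log_pos (by linarith)
  have hl0 : ∀ n, 0 < l n := fun n => by
    have h1 := one_pos.trans_le (hA1 n)
    have h2 := one_pos.trans_le (hAB1 n)
    rw [hl n]; positivity
  have hratio : ∀ n : ℕ, aleph * l n / l (n + 1) = aleph * Real.exp (2 * n + 1) * 2 *
      ((GammaAB α β (2 ^ (n + 1)) / GammaAB α β (2 ^ n)) *
        (GammaA α (2 ^ (n + 1)) / GammaA α (2 ^ n))) := fun n => by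
    have h1 := one_pos.trans_le (hA1 n)
    have h2 := one_pos.trans_le (hAB1 n)
    have h3 := one_pos.trans_le (hA1 (n + 1))
    have h4 := one_pos.trans_le (hAB1 (n + 1))
    have hexp : Real.exp (-(n : ℝ) ^ 2) =
        Real.exp (2 * n + 1) * Real.exp (-((n + 1 : ℕ) : ℝ) ^ 2) := by
      rw [← Real.exp_add]; congr 1; push_cast; ring
    rw [hl n, hl (n + 1), hexp]
    field_simp
    ring
  have hratio_ge : ∀ n : ℕ, 1 ≤ aleph * l n / l (n + 1) := fun n => by
    have h1 : 1 ≤ GammaAB α β (2 ^ (n + 1)) / GammaAB α β (2 ^ n) :=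
      (one_le_div (one_pos.trans_le (hAB1 n))).mpr
        (GammaAB_mono α β (Nat.pow_le_pow_right two_pos n.le_succ))
    have h2 : 1 ≤ GammaA α (2 ^ (n + 1)) / GammaA α (2 ^ n) :=
      (one_le_div (one_pos.trans_le (hA1 n))).mpr
        (GammaA_mono α Nat.one_le_two_pow (Nat.pow_le_pow_right two_pos n.le_succ))
    have h3 : 1 ≤ Real.exp (2 * (n : ℝ) + 1) := Real.one_le_exp (by positivity)
    rw [hratio n]
    exact one_le_mul_of_one_le_of_one_le (one_le_mul_of_one_le_of_one_le
      (one_le_mul_of_one_le_of_one_le (by linarith) h3) one_le_two)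
      (one_le_mul_of_one_le_of_one_le h1 h2)
  have hratio_log : ∀ n : ℕ, (Real.log (aleph * l n / l (n + 1)) + n + 1) / 2 ^ n ≤
      Real.log aleph * (1 / 2) ^ n + s n := fun n => by
    have h1 := one_pos.trans_le (hA1 n)
    have h2 := one_pos.trans_le (hAB1 n)
    have h3 := one_pos.trans_le (hA1 (n + 1))
    have h4 := one_pos.trans_le (hAB1 (n + 1))
    have hlog : Real.log (aleph * l n / l (n + 1)) = Real.log aleph + (2 * n + 1) + Real.log 2 +
        ((Real.log (GammaAB α β (2 ^ (n + 1))) - Real.log (GammaAB α β (2 ^ n))) +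
          (Real.log (GammaA α (2 ^ (n + 1))) - Real.log (GammaA α (2 ^ n)))) := by
      rw [hratio n, Real.log_mul (by positivity) (by positivity),
        Real.log_mul (by positivity) (by positivity),
        Real.log_mul (by positivity) (by positivity), Real.log_exp,
        Real.log_mul (by positivity) (by positivity),
        Real.log_div h4.ne' h2.ne', Real.log_div h3.ne' h1.ne']
    have hsplit : Real.log aleph * (1 / 2) ^ n + s n = (Real.log aleph + (3 * n + 3 +
        Real.log (GammaAB α β (2 ^ (n + 1))) + Real.log (GammaA α (2 ^ (n + 1))))) / 2 ^ n := by
      simp only [hs, div_pow, one_pow]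
      ring
    rw [hsplit, hlog]
    gcongr ?_ / _
    linarith [Real.log_nonneg (hA1 n), Real.log_nonneg (hAB1 n), Real.log_two_lt_d9]
  choose d hd0 hd_le hd_eq using fun n => exists_mul_exp_eq n (hratio_ge n)
  have hmajor : Summable fun n : ℕ => Real.log aleph * (1 / 2) ^ n + s n :=
    (hgeom.mul_left _).add hs_sum
  have hd_bound : ∀ n, d n ≤ Real.log aleph * (1 / 2) ^ n + s n := fun n =>
    (hd_le n).trans (hratio_log n)
  have hd_sum : Summable d := hmajor.of_nonneg_of_le (fun n => (hd0 n).le) hd_bound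
  refine ⟨d, hd0, fun n => ?_, hd_sum, ?_⟩
  · have h := hd_eq n
    rw [eq_div_iff (hl0 (n + 1)).ne'] at h
    rw [eq_div_iff (hd0 n).ne', ← h, Real.exp_neg]
    field_simp
  · calc ∑' n, d n ≤ ∑' n : ℕ, (Real.log aleph * (1 / 2) ^ n + s n) :=
          hd_sum.tsum_le_tsum hd_bound hmajor
      _ = Real.log aleph * 2 + ∑' n, s n := by
          rw [(hgeom.mul_left _).tsum_add hs_sum, tsum_mul_left, tsum_geometric_two]
      _ < (∑' n, s n + 3) * (1 + Real.log aleph) := by nlinarith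
end
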